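/- arXiv:2203.14665 — 2 statements merged into one kernel-verified Lean document; each statement's English description precedes it below -/
import Mathlib

section
/- Let 𝒜 be a unital C*-algebra and n ≥ 1. For each q ∈ (0,1), let (Y_{i,j}(q))_{1≤i,j≤n+1} be elements of 𝒜 such that for all 1 ≤ r, s ≤ n+1 the cofactor identity Y_{r,s}(q)* = (−q)^{s−r} Σ_{σ ∈ S_n} (−q)^{ℓ(σ)} Y_{i_1, j_{σ(1)}}(q) Y_{i_2, j_{σ(2)}}(q) ⋯ Y_{i_n, j_{σ(n)}}(q) holds, where i_k = k for k < r and i_k = k+1 for k ≥ r, j_k = k for k < s and j_k = k+1 for k ≥ s, the sum is over all permutations σ of {1,…,n}, and ℓ(σ) is the number of inversions of σ. Assume that for all i, j the rescaled limit Z_{i,j} = lim_{q→0+} (−q)^{min(i−j,0)} Y_{i,j}(q) exists in norm. Then for all r, s: if r > s, Z_{r,s}* = Z_{1,1} ⋯ Z_{s−1,s−1} Z_{s,s+1} Z_{s+1,s+2} ⋯ Z_{r−1,r} Z_{r+1,r+1} ⋯ Z_{n+1,n+1}; if r < s, Z_{r,s}* = Z_{1,1} ⋯ Z_{r−1,r−1}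 Z_{r+1,r} Z_{r+2,r+1} ⋯ Z_{s,s−1} Z_{s+1,s+1} ⋯ Z_{n+1,n+1}; and if r = s, Z_{r,r}* = Z_{1,1} ⋯ Z_{r−1,r−1} Z_{r+1,r+1} ⋯ Z_{n+1,n+1}. -/
/-!
The rescaling factors are real, so multiplying the cofactor identity by `(-q)^{min(r-s,0)}` and
distributing rescaling factors over the entries of each monomial gives
`star (Z r s) = lim ∑_σ (-q)^{e(σ)} ∏_k (rescaled entry)_k`, where
`e(σ) = ℓ(σ) + min(s-r,0) + ∑_k max(j_{σ(k)} - i_k, 0)`.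
Since `∑_k (j_{σ(k)} - i_k) = r - s`, the last two terms have nonnegative sum, hence
`e(σ) ≥ ℓ(σ)`; moreover `e(1) = 0`, because all the differences `j_k - i_k` have the same sign
(`cofactorExponent_nonneg`, `cofactorExponent_one`).
As `ℓ(σ) > 0` for `σ ≠ 1`, only the identity permutation survives in the limit, so
`star (Z r s) = Z_{i_1,j_1} ⋯ Z_{i_n,j_n}` (`star_limit_eq_prod`). The three formulas are obtained
by cutting this product where `i_k` and `j_k` jump.
-/


open Filter

/-- The rescaling factor `(−q)^{min(i−j,0)}` (as a complex scalar, `q` real). -/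
noncomputable def rescale (i j : ℕ) (q : ℝ) : ℂ := (-(q : ℂ)) ^ (min ((i : ℤ) - (j : ℤ)) 0)

/-- The number of inversions of a permutation of `Fin m`. -/
def inversions {m : ℕ} (σ : Equiv.Perm (Fin m)) : ℕ :=
  (Finset.univ.filter (fun p : Fin m × Fin m => p.1 < p.2 ∧ σ p.2 < σ p.1)).card

open Topology

/-- The increasing enumeration (from `k = 0`) of the positive integers other than `r`. -/
def skip (r k : ℕ) : ℕ := if k + 1 < r then k + 1 else k + 2

/-- The exponent of `-q` in front of the monomial of `σ`, once the cofactor identity for `(r,s)`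
has been rewritten in terms of the rescaled entries. -/
def cofactorExponent {n : ℕ} (r s : ℕ) (σ : Equiv.Perm (Fin n)) : ℤ :=
  min ((r : ℤ) - s) 0 + ((s : ℤ) - r) + inversions σ -
    ∑ k : Fin n, min ((skip r k : ℤ) - skip s (σ k)) 0

lemma eq_one_of_inversions_eq_zero {n : ℕ} (σ : Equiv.Perm (Fin n)) (h : inversions σ = 0) :
    σ = 1 := by
  rw [inversions, Finset.card_eq_zero, Finset.filter_eq_empty_iff] at h
  have hmono : StrictMono σ := by
    intro a b hab
    have h1 := h (Finset.mem_univ (a, b))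
    have h2 : σ a ≠ σ b := fun h => hab.ne (σ.injective h)
    simp only [not_and, not_lt] at h1
    exact lt_of_le_of_ne (h1 hab) h2
  ext k
  have := congrArg (fun e : Fin n ≃o Fin n => (e k : ℕ))
    (Subsingleton.elim (hmono.orderIsoOfSurjective σ σ.surjective) (OrderIso.refl _))
  simpa using this

lemma inversions_one {n : ℕ} : inversions (1 : Equiv.Perm (Fin n)) = 0 := by
  rw [inversions, Finset.card_eq_zero, Finset.filter_eq_empty_iff]
  rintro ⟨a, b⟩ -
  simpa using fun h : a < b => h.le

lemma skip_anti {r s : ℕ} (h : r ≤ s) (k : ℕ) : skip s k ≤ skip r k := by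
  unfold skip
  split_ifs <;> omega

lemma sum_skip {n r : ℕ} (h1 : 1 ≤ r) (h2 : r ≤ n + 1) :
    ∑ k : Fin n, (skip r k : ℤ) = ∑ k ∈ Finset.range n, ((k : ℤ) + 2) - ((r : ℤ) - 1) := by
  rw [Fin.sum_univ_eq_sum_range (fun k => (skip r k : ℤ))]
  have key : ∀ m : ℕ, ∑ k ∈ Finset.range m, (skip r k : ℤ) =
      ∑ k ∈ Finset.range m, ((k : ℤ) + 2) - min (m : ℤ) ((r : ℤ) - 1) := by
    intro m
    induction m with
    | zero => simp; omega
    | succ m ih =>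
      rw [Finset.sum_range_succ, Finset.sum_range_succ, ih]
      unfold skip
      split_ifs <;> push_cast <;> omega
  rw [key]
  omega

lemma sum_skip_sub {n r s : ℕ} (hr : r ∈ Finset.Icc 1 (n + 1)) (hs : s ∈ Finset.Icc 1 (n + 1))
    (σ : Equiv.Perm (Fin n)) :
    ∑ k : Fin n, ((skip r k : ℤ) - skip s (σ k)) = (s : ℤ) - r := by
  rw [Finset.mem_Icc] at hr hs
  rw [Finset.sum_sub_distrib, Equiv.sum_comp σ (fun k => (skip s k : ℤ)),
    sum_skip hr.1 hr.2, sum_skip hs.1 hs.2]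
  ring

lemma cofactorExponent_nonneg {n r s : ℕ} (hr : r ∈ Finset.Icc 1 (n + 1))
    (hs : s ∈ Finset.Icc 1 (n + 1)) (σ : Equiv.Perm (Fin n)) :
    (inversions σ : ℤ) ≤ cofactorExponent r s σ := by
  have h1 : ∑ k : Fin n, min ((skip r k : ℤ) - skip s (σ k)) 0 ≤ (s : ℤ) - r := by
    rw [← sum_skip_sub hr hs σ]
    exact Finset.sum_le_sum fun k _ => min_le_left _ _
  have h2 : ∑ k : Fin n, min ((skip r k : ℤ) - skip s (σ k)) 0 ≤ 0 :=
    Finset.sum_nonpos fun k _ => min_le_right _ _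
  unfold cofactorExponent
  omega

lemma cofactorExponent_one {n r s : ℕ} (hr : r ∈ Finset.Icc 1 (n + 1))
    (hs : s ∈ Finset.Icc 1 (n + 1)) :
    cofactorExponent r s (1 : Equiv.Perm (Fin n)) = 0 := by
  have h := sum_skip_sub hr hs 1
  unfold cofactorExponent
  rw [inversions_one]
  rcases le_total r s with hrs | hrs
  · have : ∑ k : Fin n, min ((skip r k : ℤ) - skip s ((1 : Equiv.Perm (Fin n)) k)) 0 = 0 := by
      refine Finset.sum_eq_zero fun k _ => ?_
      have := skip_anti hrs k
      simp only [Equiv.Perm.one_apply]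
      omega
    omega
  · have : ∑ k : Fin n, min ((skip r k : ℤ) - skip s ((1 : Equiv.Perm (Fin n)) k)) 0 =
        ∑ k : Fin n, ((skip r k : ℤ) - skip s ((1 : Equiv.Perm (Fin n)) k)) := by
      refine Finset.sum_congr rfl fun k _ => ?_
      have := skip_anti hrs k
      simp only [Equiv.Perm.one_apply]
      omega
    omega

lemma list_prod_zpow_smul {A ι : Type*} [Ring A] [Algebra ℂ A] {x : ℂ} (hx : x ≠ 0)
    (c : ι → ℤ) (y : ι → A) (l : List ι) :
    (l.map fun k => x ^ c k • y k).prod = x ^ (l.map c).sum • (l.map y).prod := by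
  induction l with
  | nil => simp
  | cons a l ih =>
    simp only [List.map_cons, List.prod_cons, List.sum_cons, ih]
    rw [smul_mul_smul_comm, zpow_add₀ hx]

lemma star_rescale (i j : ℕ) (q : ℝ) : star (rescale i j q) = rescale i j q := by
  simp [rescale]

lemma tendsto_neg_zpow {e : ℤ} (he : 0 < e) :
    Tendsto (fun q : ℝ => (-(q : ℂ)) ^ e) (𝓝[Set.Ioo 0 1] 0) (𝓝 0) := by
  lift e to ℕ using he.le
  have hc : Continuous fun q : ℝ => (-(q : ℂ)) ^ e := by fun_prop
  have h := (hc.tendsto 0).mono_left (nhdsWithin_le_nhds (s := Set.Ioo (0 : ℝ) 1))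
  have he0 : e ≠ 0 := by omega
  simpa [he0] using h

/-- The cofactor identity in terms of rescaled entries. -/
lemma star_rescaled_eq {A : Type*} [Ring A] [StarRing A] [Algebra ℂ A] [StarModule ℂ A]
    {n : ℕ} (y : ℕ → ℕ → A) {q : ℝ} (hq : q ≠ 0) (r s : ℕ)
    (h : star (y r s) = ((-(q : ℂ)) ^ ((s : ℤ) - (r : ℤ))) •
        ∑ σ : Equiv.Perm (Fin n), ((-(q : ℂ)) ^ (inversions σ)) •
            (List.ofFn (fun k : Fin n => y (skip r k) (skip s (σ k)))).prod) :
    star (rescale r s q • y r s) = ∑ σ : Equiv.Perm (Fin n),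
      (-(q : ℂ)) ^ cofactorExponent r s σ •
        ((List.finRange n).map fun k : Fin n =>
          rescale (skip r k) (skip s (σ k)) q • y (skip r k) (skip s (σ k))).prod := by
  have hx : -(q : ℂ) ≠ 0 := by simpa using hq
  rw [star_smul, star_rescale, h, Finset.smul_sum, Finset.smul_sum]
  refine Finset.sum_congr rfl fun σ _ => ?_
  unfold rescale
  rw [list_prod_zpow_smul hx, List.ofFn_eq_map, smul_smul, smul_smul, smul_smul,
    ← zpow_natCast, ← zpow_add₀ hx, ← zpow_add₀ hx, ← zpow_add₀ hx]
  have hsum : ((List.finRange n).map fun k : Fin n =>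
      min ((skip r k : ℤ) - skip s (σ k)) 0).sum =
      ∑ k : Fin n, min ((skip r k : ℤ) - skip s (σ k)) 0 := by
    rw [← List.ofFn_eq_map, List.sum_ofFn]
  rw [hsum, cofactorExponent]
  congr 2
  ring

/-- In the limit `q → 0+` only the monomial of the identity permutation survives. -/
lemma star_limit_eq_prod
    {A : Type*} [NormedRing A] [StarRing A] [CStarRing A] [NormedAlgebra ℂ A] [StarModule ℂ A]
    {n : ℕ} (Y : ℝ → ℕ → ℕ → A) (Z : ℕ → ℕ → A) {r s : ℕ}
    (hr : r ∈ Finset.Icc 1 (n + 1)) (hs : s ∈ Finset.Icc 1 (n + 1))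
    (hcof : ∀ q ∈ Set.Ioo (0:ℝ) 1,
      star (Y q r s) = ((-(q : ℂ)) ^ ((s : ℤ) - (r : ℤ))) •
        ∑ σ : Equiv.Perm (Fin n), ((-(q : ℂ)) ^ (inversions σ)) •
            (List.ofFn (fun k : Fin n => Y q (skip r k) (skip s (σ k)))).prod)
    (hZ : ∀ i j, i ∈ Finset.Icc 1 (n+1) → j ∈ Finset.Icc 1 (n+1) →
      Tendsto (fun q : ℝ => rescale i j q • Y q i j) (𝓝[Set.Ioo 0 1] 0) (𝓝 (Z i j))) :
    star (Z r s) = ((List.range n).map fun k => Z (skip r k) (skip s k)).prod := by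
  have hne : (𝓝[Set.Ioo (0 : ℝ) 1] 0).NeBot := by
    rw [nhdsWithin_Ioo_eq_nhdsGT one_pos]
    infer_instance
  have hskip : ∀ (t : ℕ) (k : Fin n), skip t k ∈ Finset.Icc 1 (n + 1) := by
    intro t k
    have := k.isLt
    rw [Finset.mem_Icc, skip]
    split_ifs <;> omega
  have hcoef : ∀ σ : Equiv.Perm (Fin n),
      Tendsto (fun q : ℝ => (-(q : ℂ)) ^ cofactorExponent r s σ) (𝓝[Set.Ioo 0 1] 0)
        (𝓝 (if σ = 1 then 1 else 0)) := by
    intro σ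
    split_ifs with hσ
    · subst hσ
      simp [cofactorExponent_one hr hs]
    · have h0 : inversions σ ≠ 0 := fun h => hσ (eq_one_of_inversions_eq_zero σ h)
      have := cofactorExponent_nonneg hr hs σ
      exact tendsto_neg_zpow (by omega)
  have hlim := tendsto_finsetSum Finset.univ fun (σ : Equiv.Perm (Fin n)) _ =>
    (hcoef σ).smul (tendsto_list_prod (List.finRange n) fun k _ =>
      hZ (skip r k) (skip s (σ k)) (hskip r k) (hskip s (σ k)))
  have heq := tendsto_nhds_unique_of_eventuallyEq ((hZ r s hr hs).star) hlim
    (eventually_nhdsWithin_of_forall fun q hq =>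
      star_rescaled_eq (Y q) hq.1.ne' r s (hcof q hq))
  rw [heq, Finset.sum_eq_single 1 (fun σ _ hσ => by simp [hσ]) (by simp), if_pos rfl, one_smul]
  rw [← List.map_coe_finRange_eq_range, List.map_map]
  rfl

/-- Cut a product over `range n` into three consecutive blocks. -/
lemma prod_range_split {M : Type*} [Monoid M] {n : ℕ} (F f g h : ℕ → M) (a b c : ℕ)
    (hn : n = a + b + c) (hf : ∀ m < a, F m = f m) (hg : ∀ m < b, F (a + m) = g m)
    (hh : ∀ m < c, F (a + b + m) = h m) :
    ((List.range n).map F).prod = ((List.range a).map f).prod * ((List.range b).map g).prod *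
      ((List.range c).map h).prod := by
  subst hn
  rw [List.range_add, List.range_add]
  simp only [List.map_append, List.prod_append, List.map_map]
  congr 2
  · congr 1
    exact List.map_congr_left fun m hm => hf m (List.mem_range.1 hm)
  · congr 1
    exact List.map_congr_left fun m hm => hg m (List.mem_range.1 hm)
  · exact List.map_congr_left fun m hm => hh m (List.mem_range.1 hm)

/-- from the cofactor identity
`Y_{r,s}(q)* = (−q)^{s−r} ∑_{σ ∈ S_n} (−q)^{ℓ(σ)} Y_{i_1,j_{σ(1)}}(q) ⋯ Y_{i_n,j_{σ(n)}}(q)`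
(where `i_k = k` for `k < r` and `k+1` for `k ≥ r`, `j_k = k` for `k < s` and `k+1` for
`k ≥ s`, with `k` in `{1,…,n}` encoded as `Fin n` via `k ↦ k.val + 1`), and existence of
the rescaled limits `Z_{i,j}`, one derives the formulas for the adjoints `Z_{r,s}*`. -/
theorem rescaled_limit_adjoint_formula
    {A : Type*} [NormedRing A] [StarRing A] [CStarRing A]
    [NormedAlgebra ℂ A] [StarModule ℂ A] [CompleteSpace A]
    (n : ℕ) (hn : 1 ≤ n)
    (Y : ℝ → ℕ → ℕ → A) (Z : ℕ → ℕ → A)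
    (hcof : ∀ q ∈ Set.Ioo (0:ℝ) 1, ∀ r s,
      r ∈ Finset.Icc 1 (n+1) → s ∈ Finset.Icc 1 (n+1) →
      star (Y q r s) = ((-(q : ℂ)) ^ ((s : ℤ) - (r : ℤ))) •
        ∑ σ : Equiv.Perm (Fin n),
          ((-(q : ℂ)) ^ (inversions σ)) •
            (List.ofFn (fun k : Fin n =>
              Y q (if k.val + 1 < r then k.val + 1 else k.val + 2)
                  (if (σ k).val + 1 < s then (σ k).val + 1 else (σ k).val + 2))).prod)
    (hZ : ∀ i j, i ∈ Finset.Icc 1 (n+1) → j ∈ Finset.Icc 1 (n+1) →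
      Tendsto (fun q : ℝ => rescale i j q • Y q i j)
        (nhdsWithin 0 (Set.Ioo 0 1)) (nhds (Z i j))) :
    ∀ r s, r ∈ Finset.Icc 1 (n+1) → s ∈ Finset.Icc 1 (n+1) →
      ((s < r → star (Z r s) =
        ((List.range (s - 1)).map (fun m => Z (m + 1) (m + 1))).prod *
        ((List.range (r - s)).map (fun m => Z (s + m) (s + m + 1))).prod *
        ((List.range (n + 1 - r)).map (fun m => Z (r + 1 + m) (r + 1 + m))).prod) ∧
      (r < s → star (Z r s) =
        ((List.range (r - 1)).map (fun m => Z (m + 1) (m + 1))).prod *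
        ((List.range (s - r)).map (fun m => Z (r + 1 + m) (r + m))).prod *
        ((List.range (n + 1 - s)).map (fun m => Z (s + 1 + m) (s + 1 + m))).prod) ∧
      (r = s → star (Z r r) =
        ((List.range (r - 1)).map (fun m => Z (m + 1) (m + 1))).prod *
        ((List.range (n + 1 - r)).map (fun m => Z (r + 1 + m) (r + 1 + m))).prod)) := by
  intro r s hr hs
  have main := star_limit_eq_prod Y Z hr hs (fun q hq => hcof q hq r s hr hs) hZ
  rw [Finset.mem_Icc] at hr hs
  refine ⟨fun h => ?_, fun h => ?_, fun h => ?_⟩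
  · rw [main]
    apply prod_range_split
    · omega
    all_goals
      intro m hm
      congr 1 <;> unfold skip <;> split_ifs <;> omega
  · rw [main]
    apply prod_range_split
    · omega
    all_goals
      intro m hm
      congr 1 <;> unfold skip <;> split_ifs <;> omega
  · subst h
    rw [main]
    -- the middle block is empty when `r = s`
    rw [prod_range_split _ (fun m => Z (m + 1) (m + 1)) (fun _ => 1)
      (fun m => Z (r + 1 + m) (r + 1 + m)) (r - 1) 0 (n + 1 - r)]
    · simp
    · omega
    all_goals
      intro m hm
      first
        | omega
        | (congr 1 <;> unfold skip <;> split_ifs <;> omega)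
end

section
/- Let A be a unital C*-algebra and let (z_{i,j})_{1≤i,j≤3} be a family in A satisfying the A₂(0) relations. Then for any two elements a, b of the set {z_{i,j} : 1 ≤ j ≤ i ≤ 3} ∪ {z_{i,j}* : 1 ≤ j ≤ i ≤ 3}, the product ab is a partial isometry, i.e. (ab)(ab)*(ab) = ab. -/
/-!
Write `P = z₁₁* z₁₁`, `Q = z₃₃ z₃₃*`, `D = z₂₁* z₂₁`, `H = z₃₂ z₃₂*`. The relations express the
initial and the range projection of each of the six lower triangular generators through these four
elements:

* `z₁₁ z₁₁* = 1` and `z₃₃* z₃₃ = 1`;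
* `z₂₂ z₂₂* = P` and `z₂₂* z₂₂ = Q`;
* `z₂₁ z₂₁* = 1 - P` and `z₃₂* z₃₂ = 1 - Q`;
* `z₃₁* z₃₁ = 1 - P - D` and `z₃₁ z₃₁* = 1 - Q - H`.

From this list each generator is a partial isometry, because in a C⋆-algebra `x` is a partial
isometry as soon as `x x*` is idempotent. Moreover `P, Q, D, H` commute pairwise: `P D = 0` and
`Q H = 0`, while each other product of two of them is self-adjoint. Hence all initial and range
projections lie in a commutative subring, and the product of two partial isometries `u, v` is a
partial isometry whenever `u* u` commutes with `v v*`.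
-/

/-- `i` is a valid index, i.e. `i ∈ {1, 2, 3}`. -/
def Idx3 (i : ℕ) : Prop := 1 ≤ i ∧ i ≤ 3

/-- The `A₂(0)` relations (R1)–(R9) for a family `(z_{i,j})_{1≤i,j≤3}` in a
unital *-ring. -/
structure A2Rel {A : Type*} [Ring A] [StarRing A] (z : ℕ → ℕ → A) : Prop where
  r1 : ∀ i j l, Idx3 i → Idx3 j → Idx3 l → j < l → z i j * z i l = 0
  r2 : ∀ i k j, Idx3 i → Idx3 k → Idx3 j → i < k → z i j * z k j = 0
  r3 : ∀ i k j l, Idx3 i → Idx3 k → Idx3 j → Idx3 l → i < k → j < l →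
    z i l * z k j = z k j * z i l
  r4 : ∀ i k j l, Idx3 i → Idx3 k → Idx3 j → Idx3 l → i < k → j < l →
    min k l ≤ max i j → z i l * z k j = 0
  r5 : ∀ i k j l, Idx3 i → Idx3 k → Idx3 j → Idx3 l → i < k → j < l →
    max i j + 1 < min k l → z i j * z k l = z k l * z i j
  r6 : ∀ i k j l, Idx3 i → Idx3 k → Idx3 j → Idx3 l → i < k → j < l →
    max i j + 1 = min k l → z i j * z k l - z k l * z i j = z i l * z k j
  r7 : z 1 1 * z 2 2 * z 3 3 = 1
  r8_11 : star (z 1 1) = z 2 2 * z 3 3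
  r8_22 : star (z 2 2) = z 1 1 * z 3 3
  r8_33 : star (z 3 3) = z 1 1 * z 2 2
  r8_21 : star (z 2 1) = z 1 2 * z 3 3
  r8_31 : star (z 3 1) = z 1 2 * z 2 3
  r8_32 : star (z 3 2) = z 1 1 * z 2 3
  r8_12 : star (z 1 2) = z 2 1 * z 3 3
  r8_13 : star (z 1 3) = z 2 1 * z 3 2
  r8_23 : star (z 2 3) = z 1 1 * z 3 2
  r9 : ∀ i j r s, Idx3 i → Idx3 j → Idx3 r → Idx3 s → i ≠ r → j ≠ s →
    star (z i j) * z r s = z r s * star (z i j)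

namespace A2Rel

section PartialIsometry

variable {A : Type*} [NormedRing A] [StarRing A]

lemma mul_partialIsometry {u v : A} (hu : u * star u * u = u) (hv : v * star v * v = v)
    (huv : Commute (star u * u) (v * star v)) :
    (u * v) * star (u * v) * (u * v) = u * v := by
  calc (u * v) * star (u * v) * (u * v)
      = u * ((v * star v) * (star u * u)) * v := by simp only [star_mul, mul_assoc]
    _ = (u * star u * u) * (v * star v * v) := by rw [← huv.eq]; simp only [mul_assoc]
    _ = u * v := by rw [hu, hv]

lemma star_partialIsometry {u : A} (hu : u * star u * u = u) :
    star u * star (star u) * star u = star u := by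
  simpa [mul_assoc] using congrArg star hu

variable [CStarRing A]

/-- If `x x*` is idempotent, then `(x x* x - x) (x x* x - x)* = 0`, so `x` is a partial isometry. -/
lemma partialIsometry_of_idem {x : A} (hx : (x * star x) * (x * star x) = x * star x) :
    x * star x * x = x := by
  rw [← sub_eq_zero, ← CStarRing.mul_star_self_eq_zero_iff]
  have : (x * star x * x - x) * star (x * star x * x - x)
      = (x * star x) * (x * star x) * (x * star x) - (x * star x) * (x * star x)
        - (x * star x) * (x * star x) + x * star x := by
    simp only [star_sub, star_mul, star_star, sub_mul, mul_sub, mul_assoc]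
    abel
  rw [this, hx, hx]
  abel

lemma partialIsometry_of_idem_star {x : A} (hx : (star x * x) * (star x * x) = star x * x) :
    x * star x * x = x := by
  have := partialIsometry_of_idem (x := star x) (by simpa using hx)
  simpa using star_partialIsometry this

end PartialIsometry

lemma idx1 : Idx3 1 := ⟨by decide, by decide⟩
lemma idx2 : Idx3 2 := ⟨by decide, by decide⟩
lemma idx3 : Idx3 3 := ⟨by decide, by decide⟩

section Projections

variable {A : Type*} [NormedRing A] [StarRing A] {z : ℕ → ℕ → A}

lemma a_star (h : A2Rel z) : z 1 1 * star (z 1 1) = 1 := by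
  rw [h.r8_11, ← mul_assoc, h.r7]

lemma star_k (h : A2Rel z) : star (z 3 3) * z 3 3 = 1 := by
  rw [h.r8_33, h.r7]

lemma a_k (h : A2Rel z) : z 1 1 * z 3 3 = z 3 3 * z 1 1 :=
  h.r5 1 3 1 3 idx1 idx3 idx1 idx3 (by decide) (by decide) (by decide)

lemma e_star (h : A2Rel z) : z 2 2 * star (z 2 2) = star (z 1 1) * z 1 1 := by
  rw [h.r8_22, h.r8_11, h.a_k, mul_assoc]

lemma star_e (h : A2Rel z) : star (z 2 2) * z 2 2 = z 3 3 * star (z 3 3) := by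
  rw [h.r8_22, h.r8_33, h.a_k, mul_assoc]

lemma d_star (h : A2Rel z) : z 2 1 * star (z 2 1) = 1 - star (z 1 1) * z 1 1 := by
  have h3 := h.r3 1 2 1 2 idx1 idx2 idx1 idx2 (by decide) (by decide)
  have h6 := h.r6 1 2 1 2 idx1 idx2 idx1 idx2 (by decide) (by decide) (by decide)
  rw [← h.e_star, h.r8_21, h.r8_22, ← mul_assoc, ← h3, ← h6, sub_mul, h.r7, mul_assoc]

lemma star_h (h : A2Rel z) : star (z 3 2) * z 3 2 = 1 - z 3 3 * star (z 3 3) := by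
  have h6 := h.r6 2 3 2 3 idx2 idx3 idx2 idx3 (by decide) (by decide) (by decide)
  rw [← h.star_e, h.r8_32, h.r8_22, mul_assoc, ← h6, mul_sub, ← mul_assoc, h.r7, mul_assoc]

lemma star_g (h : A2Rel z) : star (z 3 1) * z 3 1
    = 1 - star (z 1 1) * z 1 1 - star (z 2 1) * z 2 1 := by
  have h3 := h.r3 1 2 1 2 idx1 idx2 idx1 idx2 (by decide) (by decide)
  have h6 := h.r6 2 3 1 3 idx2 idx3 idx1 idx3 (by decide) (by decide) (by decide)
  rw [← h.d_star, h.r8_31, h.r8_21, mul_assoc, ← h6, mul_sub]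
  simp only [← mul_assoc]
  rw [h3]

lemma g_star (h : A2Rel z) : z 3 1 * star (z 3 1)
    = 1 - z 3 3 * star (z 3 3) - z 3 2 * star (z 3 2) := by
  have h3 := h.r3 1 3 1 2 idx1 idx3 idx1 idx2 (by decide) (by decide)
  have h3' := h.r3 2 3 2 3 idx2 idx3 idx2 idx3 (by decide) (by decide)
  have h6 := h.r6 1 3 1 2 idx1 idx3 idx1 idx2 (by decide) (by decide) (by decide)
  rw [← h.star_h, h.r8_31, h.r8_32, ← mul_assoc, ← h3, ← h6, sub_mul]
  simp only [mul_assoc]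
  rw [h3']

lemma commute_P_Q (h : A2Rel z) :
    Commute (star (z 1 1) * z 1 1) (z 3 3 * star (z 3 3)) := by
  have h1 : Commute (z 1 1) (z 3 3) := h.a_k
  have h2 : Commute (star (z 1 1)) (z 3 3) :=
    h.r9 1 1 3 3 idx1 idx1 idx3 idx3 (by decide) (by decide)
  have h3 : Commute (z 1 1) (star (z 3 3)) := by simpa using h2.star_star
  exact (h2.mul_right h1.star_star).mul_left (h1.mul_right h3)

lemma P_mul_D (h : A2Rel z) : (star (z 1 1) * z 1 1) * (star (z 2 1) * z 2 1) = 0 := by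
  have h1 := h.r1 1 1 2 idx1 idx1 idx2 (by decide)
  have h2 : z 1 1 * star (z 2 1) = 0 := by rw [h.r8_21, ← mul_assoc, h1, zero_mul]
  rw [mul_assoc, ← mul_assoc (z 1 1), h2, zero_mul, mul_zero]

lemma Q_mul_H (h : A2Rel z) : (z 3 3 * star (z 3 3)) * (z 3 2 * star (z 3 2)) = 0 := by
  have h1 := h.r2 2 3 3 idx2 idx3 idx3 (by decide)
  have h2 : star (z 3 3) * z 3 2 = 0 := by
    have : star (z 3 2) * z 3 3 = 0 := by rw [h.r8_32, mul_assoc, h1, mul_zero]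
    simpa using congrArg star this
  rw [mul_assoc, ← mul_assoc (star (z 3 3)), h2, zero_mul, mul_zero]

/-- Two self-adjoint elements commute when their product is self-adjoint. -/
lemma commute_of_star_mul {p q : A} (hp : star p = p) (hq : star q = q)
    (hpq : star (p * q) = p * q) : Commute p q := by
  rw [star_mul, hp, hq] at hpq
  exact hpq.symm

lemma commute_P_D (h : A2Rel z) :
    Commute (star (z 1 1) * z 1 1) (star (z 2 1) * z 2 1) :=
  commute_of_star_mul (by simp) (by simp) (by rw [h.P_mul_D, star_zero])

lemma commute_Q_H (h : A2Rel z) :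
    Commute (z 3 3 * star (z 3 3)) (z 3 2 * star (z 3 2)) :=
  commute_of_star_mul (by simp) (by simp) (by rw [h.Q_mul_H, star_zero])

lemma k_star_g (h : A2Rel z) : z 3 3 * star (z 3 1) = star (z 2 1) * z 2 3 := by
  have h6 := h.r6 1 3 2 3 idx1 idx3 idx2 idx3 (by decide) (by decide) (by decide)
  have h3 := h.r3 2 3 2 3 idx2 idx3 idx2 idx3 (by decide) (by decide)
  have h2 := h.r2 1 2 3 idx1 idx2 idx3 (by decide)
  have h0 : z 1 3 * z 3 2 * z 2 3 = 0 := by rw [mul_assoc, ← h3, ← mul_assoc, h2, zero_mul]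
  rw [← h6, sub_mul, sub_eq_zero] at h0
  rw [h.r8_31, h.r8_21, ← mul_assoc, h0]

lemma star_a_g (h : A2Rel z) : star (z 1 1) * z 3 1 = z 3 2 * star (z 1 2) := by
  have h6 := h.r6 2 3 1 3 idx2 idx3 idx1 idx3 (by decide) (by decide) (by decide)
  have h6' := h.r6 2 3 2 3 idx2 idx3 idx2 idx3 (by decide) (by decide) (by decide)
  have h3 := h.r3 2 3 2 3 idx2 idx3 idx2 idx3 (by decide) (by decide)
  have h1 := h.r1 3 2 3 idx3 idx2 idx3 (by decide)
  have h4 := h.r4 2 3 1 2 idx2 idx3 idx1 idx2 (by decide) (by decide) (by decide)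
  calc star (z 1 1) * z 3 1 = z 2 2 * z 3 3 * z 3 1 := by rw [h.r8_11]
    _ = (z 2 2 * z 3 3 - z 3 3 * z 2 2) * z 3 1 := by
        rw [sub_mul, mul_assoc (z 3 3), h4, mul_zero, sub_zero]
    _ = z 3 2 * (z 2 3 * z 3 1) := by rw [h6', h3, mul_assoc]
    _ = z 3 2 * (z 2 1 * z 3 3) := by
        rw [← h6, mul_sub, ← mul_assoc _ (z 3 3), h1, zero_mul, sub_zero]
    _ = z 3 2 * star (z 1 2) := by rw [h.r8_12]

/-- `D Q = d* Q d + (d* f)(d* f)*` is self-adjoint, where `d = z₂₁` and `f = z₂₃`. -/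
lemma commute_D_Q (h : A2Rel z) :
    Commute (star (z 2 1) * z 2 1) (z 3 3 * star (z 3 3)) := by
  have h6 := h.r6 2 3 1 3 idx2 idx3 idx1 idx3 (by decide) (by decide) (by decide)
  have h9 := h.r9 3 3 2 1 idx3 idx3 idx2 idx1 (by decide) (by decide)
  have hg : z 3 1 * star (z 3 3) = star (z 2 3) * z 2 1 := by
    simpa using congrArg star h.k_star_g
  have key : (star (z 2 1) * z 2 1) * (z 3 3 * star (z 3 3))
      = star (z 2 1) * (z 3 3 * star (z 3 3)) * z 2 1
        + star (z 2 1) * (z 2 3 * star (z 2 3)) * z 2 1 := by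
    calc (star (z 2 1) * z 2 1) * (z 3 3 * star (z 3 3))
        = star (z 2 1) * (z 2 1 * z 3 3) * star (z 3 3) := by simp only [mul_assoc]
      _ = star (z 2 1) * (z 3 3 * z 2 1 + z 2 3 * z 3 1) * star (z 3 3) := by
          rw [← h6, add_sub_cancel]
      _ = star (z 2 1) * z 3 3 * (z 2 1 * star (z 3 3))
          + star (z 2 1) * z 2 3 * (z 3 1 * star (z 3 3)) := by
          simp only [mul_add, add_mul, mul_assoc]
      _ = _ := by rw [hg, ← h9]; simp only [mul_assoc]
  refine commute_of_star_mul (by simp) (by simp) ?_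
  rw [key]
  simp only [star_add, star_mul, star_star, mul_assoc]

/-- `H P = a* H a + (a* g)(a* g)*` is self-adjoint, where `a = z₁₁` and `g = z₃₁`. -/
lemma commute_H_P (h : A2Rel z) :
    Commute (z 3 2 * star (z 3 2)) (star (z 1 1) * z 1 1) := by
  have h6 := h.r6 1 3 1 2 idx1 idx3 idx1 idx2 (by decide) (by decide) (by decide)
  have h3 := h.r3 1 3 1 2 idx1 idx3 idx1 idx2 (by decide) (by decide)
  have h9 := h.r9 1 1 3 2 idx1 idx1 idx3 idx2 (by decide) (by decide)
  have hs : star (z 3 2) * star (z 1 1)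
      = star (z 1 1) * star (z 3 2) + star (z 1 2) * star (z 3 1) := by
    rw [← star_mul, ← star_mul, ← star_mul, ← h3, ← h6, ← star_add, add_sub_cancel]
  have key : (z 3 2 * star (z 3 2)) * (star (z 1 1) * z 1 1)
      = star (z 1 1) * (z 3 2 * star (z 3 2)) * z 1 1
        + star (z 1 1) * (z 3 1 * star (z 3 1)) * z 1 1 := by
    calc (z 3 2 * star (z 3 2)) * (star (z 1 1) * z 1 1)
        = z 3 2 * (star (z 3 2) * star (z 1 1)) * z 1 1 := by simp only [mul_assoc]
      _ = (z 3 2 * star (z 1 1)) * star (z 3 2) * z 1 1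
          + (z 3 2 * star (z 1 2)) * star (z 3 1) * z 1 1 := by
          rw [hs]; simp only [mul_add, add_mul, mul_assoc]
      _ = _ := by rw [← h9, ← h.star_a_g]; simp only [mul_assoc]
  refine commute_of_star_mul (by simp) (by simp) ?_
  rw [key]
  simp only [star_add, star_mul, star_star, mul_assoc]

/-- With `c = z₁₃ = h* d*` one has `c d = d c = h* d d*`, so `H D = h c d = H (1 - P)`. -/
lemma commute_H_D (h : A2Rel z) :
    Commute (z 3 2 * star (z 3 2)) (star (z 2 1) * z 2 1) := by
  have h3 := h.r3 1 2 1 3 idx1 idx2 idx1 idx3 (by decide) (by decide)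
  have h9 := h.r9 3 2 2 1 idx3 idx2 idx2 idx1 (by decide) (by decide)
  have hc : star (z 3 2) * star (z 2 1) = z 1 3 := by
    rw [← star_mul, ← h.r8_13, star_star]
  have key : (z 3 2 * star (z 3 2)) * (star (z 2 1) * z 2 1)
      = (z 3 2 * star (z 3 2)) * (1 - star (z 1 1) * z 1 1) := by
    calc (z 3 2 * star (z 3 2)) * (star (z 2 1) * z 2 1)
        = z 3 2 * ((star (z 3 2) * star (z 2 1)) * z 2 1) := by simp only [mul_assoc]
      _ = z 3 2 * (z 2 1 * (star (z 3 2) * star (z 2 1))) := by rw [hc, h3]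
      _ = z 3 2 * ((star (z 3 2) * z 2 1) * star (z 2 1)) := by rw [h9]; simp only [mul_assoc]
      _ = _ := by rw [← h.d_star]; simp only [mul_assoc]
  refine commute_of_star_mul (by simp) (by simp) ?_
  have hcomm := (Commute.one_right (z 3 2 * star (z 3 2))).sub_right h.commute_H_P
  rw [key, star_mul, hcomm.eq]
  simp

/-- The subring generated by `P, Q, D, H`, which contains every initial and range projection of the
lower triangular generators. -/
def projRing (z : ℕ → ℕ → A) : Subring A :=
  Subring.closure {star (z 1 1) * z 1 1, z 3 3 * star (z 3 3), star (z 2 1) * z 2 1,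
    z 3 2 * star (z 3 2)}

lemma projRing_commute (h : A2Rel z) {x y : A} (hx : x ∈ projRing z) (hy : y ∈ projRing z) :
    Commute x y := by
  have hgen : ∀ s ∈ ({star (z 1 1) * z 1 1, z 3 3 * star (z 3 3), star (z 2 1) * z 2 1,
      z 3 2 * star (z 3 2)} : Set A), ∀ t ∈ ({star (z 1 1) * z 1 1, z 3 3 * star (z 3 3),
      star (z 2 1) * z 2 1, z 3 2 * star (z 3 2)} : Set A), Commute s t := by
    have h1 := h.commute_P_Q
    have h2 := h.commute_P_D
    have h3 := h.commute_H_P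
    have h4 := h.commute_D_Q
    have h5 := h.commute_Q_H
    have h6 := h.commute_H_D
    rintro s (rfl | rfl | rfl | rfl) t (rfl | rfl | rfl | rfl) <;>
      first | exact Commute.refl _ | assumption | (apply Commute.symm; assumption)
  induction hx, hy using Subring.closure_induction₂ with
  | mem_mem x y hx hy => exact hgen x hx y hy
  | zero_left => exact Commute.zero_left _
  | zero_right => exact Commute.zero_right _
  | one_left => exact Commute.one_left _
  | one_right => exact Commute.one_right _
  | neg_left _ _ _ _ h => exact h.neg_left
  | neg_right _ _ _ _ h => exact h.neg_right
  | add_left _ _ _ _ _ _ h₁ h₂ => exact h₁.add_left h₂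
  | add_right _ _ _ _ _ _ h₁ h₂ => exact h₁.add_right h₂
  | mul_left _ _ _ _ _ _ h₁ h₂ => exact h₁.mul_left h₂
  | mul_right _ _ _ _ _ _ h₁ h₂ => exact h₁.mul_right h₂

variable [CStarRing A]

/-- Every lower triangular generator is a partial isometry whose initial and range projections lie
in `projRing z`. -/
lemma generator (h : A2Rel z) {i j : ℕ} (hj : 1 ≤ j) (hji : j ≤ i) (hi : i ≤ 3) :
    z i j * star (z i j) * z i j = z i j ∧
      star (z i j) * z i j ∈ projRing z ∧ z i j * star (z i j) ∈ projRing z := by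
  have mP : star (z 1 1) * z 1 1 ∈ projRing z := Subring.subset_closure (by simp)
  have mQ : z 3 3 * star (z 3 3) ∈ projRing z := Subring.subset_closure (by simp)
  have mD : star (z 2 1) * z 2 1 ∈ projRing z := Subring.subset_closure (by simp)
  have mH : z 3 2 * star (z 3 2) ∈ projRing z := Subring.subset_closure (by simp)
  have m1 : (1 : A) ∈ projRing z := one_mem _
  have pa : z 1 1 * star (z 1 1) * z 1 1 = z 1 1 := by rw [h.a_star, one_mul]
  have pk : z 3 3 * star (z 3 3) * z 3 3 = z 3 3 := by rw [mul_assoc, h.star_k, mul_one]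
  have iP : IsIdempotentElem (star (z 1 1) * z 1 1) := by
    rw [IsIdempotentElem, mul_assoc, ← mul_assoc (z 1 1), pa]
  have iQ : IsIdempotentElem (z 3 3 * star (z 3 3)) := by
    rw [IsIdempotentElem, ← mul_assoc, pk]
  have pe : z 2 2 * star (z 2 2) * z 2 2 = z 2 2 :=
    partialIsometry_of_idem (by rw [h.e_star]; exact iP)
  have pd : z 2 1 * star (z 2 1) * z 2 1 = z 2 1 :=
    partialIsometry_of_idem (by rw [h.d_star]; exact iP.one_sub)
  have ph : z 3 2 * star (z 3 2) * z 3 2 = z 3 2 :=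
    partialIsometry_of_idem_star (by rw [h.star_h]; exact iQ.one_sub)
  have iH : (z 3 2 * star (z 3 2)) * (z 3 2 * star (z 3 2)) = z 3 2 * star (z 3 2) := by
    rw [← mul_assoc, ph]
  have pg : z 3 1 * star (z 3 1) * z 3 1 = z 3 1 := by
    refine partialIsometry_of_idem ?_
    -- `(1 - Q - H)² = 1 - Q - H` because `Q H = H Q = 0`
    have hQH := h.Q_mul_H
    have hHQ := h.commute_Q_H.eq.symm.trans hQH
    rw [h.g_star]
    simp only [sub_mul, mul_sub, one_mul, mul_one, iQ.eq, iH, hQH, hHQ]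
    abel
  interval_cases i <;> interval_cases j
  · exact ⟨pa, mP, h.a_star ▸ m1⟩
  · exact ⟨pd, mD, h.d_star ▸ sub_mem m1 mP⟩
  · exact ⟨pe, h.star_e ▸ mQ, h.e_star ▸ mP⟩
  · exact ⟨pg, h.star_g ▸ sub_mem (sub_mem m1 mP) mD, h.g_star ▸ sub_mem (sub_mem m1 mQ) mH⟩
  · exact ⟨ph, h.star_h ▸ sub_mem m1 mQ, mH⟩
  · exact ⟨pk, h.star_k ▸ m1, mQ⟩

lemma generator_or_star (h : A2Rel z) {x : A}
    (hx : ∃ i j, 1 ≤ j ∧ j ≤ i ∧ i ≤ 3 ∧ (x = z i j ∨ x = star (z i j))) :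
    x * star x * x = x ∧ star x * x ∈ projRing z ∧ x * star x ∈ projRing z := by
  obtain ⟨i, j, hj, hji, hi, rfl | rfl⟩ := hx
  · exact h.generator hj hji hi
  · obtain ⟨h₁, h₂, h₃⟩ := h.generator hj hji hi
    exact ⟨star_partialIsometry h₁, by rwa [star_star], by rwa [star_star]⟩

end Projections

end A2Rel

/-- in a unital C*-algebra, if `(z_{i,j})_{1≤i,j≤3}` satisfies the `A₂(0)`
relations, then any product `a * b` with
`a, b ∈ {z_{i,j} : 1 ≤ j ≤ i ≤ 3} ∪ {z_{i,j}* : 1 ≤ j ≤ i ≤ 3}` is a partial isometry. -/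
theorem A2_products_are_partial_isometries
    {A : Type*} [NormedRing A] [StarRing A] [CStarRing A]
    [NormedAlgebra ℂ A] [StarModule ℂ A] [CompleteSpace A]
    (z : ℕ → ℕ → A) (hrel : A2Rel z) :
    ∀ a ∈ {x : A | ∃ i j, 1 ≤ j ∧ j ≤ i ∧ i ≤ 3 ∧ (x = z i j ∨ x = star (z i j))},
      ∀ b ∈ {x : A | ∃ i j, 1 ≤ j ∧ j ≤ i ∧ i ≤ 3 ∧ (x = z i j ∨ x = star (z i j))},
        (a * b) * star (a * b) * (a * b) = a * b := by
  intro a ha b hb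
  obtain ⟨pa, ia, -⟩ := hrel.generator_or_star ha
  obtain ⟨pb, -, rb⟩ := hrel.generator_or_star hb
  exact A2Rel.mul_partialIsometry pa pb (hrel.projRing_commute ia rb)
end
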